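/- Let (G,C) be a strongly connected inhomogeneous Mauldin–Williams graph in ℝ^d satisfying the SOSC with condensation sets (C_i)_{i∈V} such that ∫₀^∞ e^{−s₀(G)t} N_{e^{−t}}(C_i) dt < ∞ for all i ∈ V. Define L_i^*(t) = Σ_{e∈E_i} N_{e^{−t}}(S_e(K_{t(e)}^C)) − N_{e^{−t}}(K_i^C). Then Σ_{k=0}^∞ sup_{t∈[k,k+1]} e^{−s₀(G)t} |L_i^*(t)| < ∞ for all i ∈ V. -/

import Mathlib

open Set Filter Topology MeasureTheory Metric

noncomputable section

/-- Points of `ℝ^d`. -/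
abbrev Pt (d : ℕ) := EuclideanSpace ℝ (Fin d)

/-- The `r`-covering number of `A ⊆ ℝ^d`: the least number of closed balls of
radius `r` needed to cover `A`. -/
noncomputable def coveringNumber {d : ℕ} (A : Set (Pt d)) (r : ℝ) : ℕ :=
  sInf {k : ℕ | ∃ c : Fin k → Pt d, A ⊆ ⋃ i, Metric.closedBall (c i) r}

/-- A Mauldin–Williams graph in `ℝ^d` over a finite directed multigraph with
vertex type `V` and edge type `E`: each vertex `i` carries a non-empty compact
set `X i` equal to the closure of its interior, and each edge `e` carries a
contractive similarity `S e` of ratio `r e ∈ (0,1)` mapping `X (term e)` into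
`X (init e)`. -/
structure MWGraph (d : ℕ) (V E : Type) [Fintype V] [Fintype E] where
  init : E → V
  term : E → V
  X : V → Set (Pt d)
  S : E → Pt d → Pt d
  r : E → ℝ
  X_nonempty : ∀ i, (X i).Nonempty
  X_compact : ∀ i, IsCompact (X i)
  X_regular : ∀ i, closure (interior (X i)) = X i
  r_pos : ∀ e, 0 < r e
  r_lt_one : ∀ e, r e < 1
  S_maps : ∀ e, Set.MapsTo (S e) (X (term e)) (X (init e))
  S_sim : ∀ e x y, dist (S e x) (S e y) = r e * dist x y

namespace MWGraph

variable {d : ℕ} {V E : Type} [Fintype V] [Fintype E]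

variable (G : MWGraph d V E)

/-- `G.IsPathFrom j γ` holds iff the list of edges `γ` is a directed path
starting at vertex `j`. -/
def IsPathFrom : V → List E → Prop
  | _, [] => True
  | j, e :: es => G.init e = j ∧ IsPathFrom (G.term e) es

/-- Terminal vertex of the path `γ` starting at `j`. -/
def pathTerm : V → List E → V
  | j, [] => j
  | _, e :: es => pathTerm (G.term e) es

/-- `S_γ = S_{e₁} ∘ ⋯ ∘ S_{eₙ}` (with `S_∅ = id`). -/
def pathMap : List E → Pt d → Pt d
  | [] => id
  | e :: es => G.S e ∘ pathMap es

/-- `r_γ = r_{e₁} ⋯ r_{eₙ}` (with `r_∅ = 1`). -/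
def pathRatio (γ : List E) : ℝ := (γ.map G.r).prod

/-- The underlying multigraph is strongly connected: for every ordered pair of
vertices there is a (non-empty) directed path from the first to the second. -/
def StronglyConnected : Prop :=
  ∀ i j : V, ∃ γ : List E, γ ≠ [] ∧ G.IsPathFrom i γ ∧ G.pathTerm i γ = j

/-- `K` is the list of graph-directed self-similar sets of `G`: the unique list
of non-empty compact sets with `K i = ⋃_{e ∈ E_i} S_e (K (term e))`. -/
def IsAttractor (K : V → Set (Pt d)) : Prop :=
  (∀ i, IsCompact (K i)) ∧ (∀ i, (K i).Nonempty) ∧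
    ∀ i, K i = ⋃ e ∈ {e : E | G.init e = i}, G.S e '' K (G.term e)

/-- `C` is an admissible list of condensation sets: compact subsets of the `X i`. -/
def IsCondensation (C : V → Set (Pt d)) : Prop :=
  ∀ i, IsCompact (C i) ∧ C i ⊆ G.X i

/-- `K` is the list of inhomogeneous graph-directed self-similar sets of `(G, C)`:
the unique list of non-empty compact sets with
`K i = ⋃_{e ∈ E_i} S_e (K (term e)) ∪ C i`. -/
def IsInhomAttractor (C : V → Set (Pt d)) (K : V → Set (Pt d)) : Prop :=
  (∀ i, IsCompact (K i)) ∧ (∀ i, (K i).Nonempty) ∧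
    ∀ i, K i = (⋃ e ∈ {e : E | G.init e = i}, G.S e '' K (G.term e)) ∪ C i

/-- `G` satisfies the open set condition with the open sets `U`. -/
def IsOSCWith (U : V → Set (Pt d)) : Prop :=
  (∀ i, (U i).Nonempty) ∧ (∀ i, IsOpen (U i)) ∧ (∀ i, Bornology.IsBounded (U i)) ∧
    (∀ i, U i ⊆ G.X i) ∧
    (∀ i, (⋃ e ∈ {e : E | G.init e = i}, G.S e '' U (G.term e)) ⊆ U i) ∧
    ∀ e e' : E, G.init e = G.init e' → e ≠ e' →
      Disjoint (G.S e '' U (G.term e)) (G.S e' '' U (G.term e'))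

/-- The set `{-log r_γ : γ a directed cycle of G}`. -/
def cycleSet : Set ℝ :=
  {x : ℝ | ∃ (j : V) (γ : List E), γ ≠ [] ∧ G.IsPathFrom j γ ∧ G.pathTerm j γ = j ∧
    x = -Real.log (G.pathRatio γ)}

/-- `G_M`, the smallest closed additive subgroup of `ℝ` containing
`{-log r_γ : γ a directed cycle}`. -/
def GM : Set ℝ := closure ((AddSubgroup.closure (G.cycleSet) : AddSubgroup ℝ) : Set ℝ)

variable [DecidableEq V]

/-- The matrix `A_G^s` with entries `(A_G^s)_{ij} = Σ_{e ∈ E_{ij}} r_e^s`. -/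
def Amatrix (s : ℝ) : Matrix V V ℝ :=
  Matrix.of fun i j => ∑ e : E, if G.init e = i ∧ G.term e = j then G.r e ^ s else 0

end MWGraph

/-- Spectral radius of a real square matrix: the largest modulus of a complex
eigenvalue. -/
noncomputable def matrixSpectralRadius {n : Type} [Fintype n] [DecidableEq n]
    (A : Matrix n n ℝ) : ℝ :=
  sSup {x : ℝ | ∃ μ : ℂ, μ ∈ spectrum ℂ (A.map (fun a : ℝ => (a : ℂ))) ∧ x = ‖μ‖}

/-- `s` is the (unique) exponent `s ≥ 0` with `ρ(A_G^s) = 1`, i.e. `s = s₀(G)`. -/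
def IsS0 {d : ℕ} {V E : Type} [Fintype V] [Fintype E] [DecidableEq V]
    (G : MWGraph d V E) (s : ℝ) : Prop :=
  0 ≤ s ∧ matrixSpectralRadius (G.Amatrix s) = 1

section Perron

attribute [local instance] Matrix.linftyOpNormedRing Matrix.linftyOpNormedAlgebra

/-- If the spectral radius of a real square matrix is at most one, then for every `c > 1` some
power of the matrix has all its absolute row sums bounded by the same power of `c`. -/
theorem exists_pow_row_sum_le {n : Type} [Fintype n] [DecidableEq n] (A : Matrix n n ℝ)
    (hA : matrixSpectralRadius A ≤ 1) {c : ℝ} (hc : 1 < c) :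
    ∃ N : ℕ, 0 < N ∧ ∀ i, ∑ j, |(A ^ N) i j| ≤ c ^ N := by
  set B : Matrix n n ℂ := A.map (fun a : ℝ => (a : ℂ)) with hB
  have hsr : spectralRadius ℂ B ≤ 1 := by
    refine iSup₂_le fun μ hμ => ?_
    have hbdd : BddAbove {x : ℝ | ∃ μ : ℂ, μ ∈ spectrum ℂ B ∧ x = ‖μ‖} := by
      obtain ⟨R, hR⟩ := (spectrum.isBounded (𝕜 := ℂ) B).exists_norm_le
      exact ⟨R, by rintro x ⟨μ, hμ, rfl⟩; exact hR μ hμ⟩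
    have h1 : ‖μ‖ ≤ 1 := (le_csSup hbdd ⟨μ, hμ, rfl⟩).trans hA
    exact_mod_cast h1
  have hlim := spectrum.pow_nnnorm_pow_one_div_tendsto_nhds_spectralRadius B
  have hlt : spectralRadius ℂ B < ENNReal.ofReal c :=
    hsr.trans_lt (by simpa using hc)
  obtain ⟨N, hN, hN0⟩ := ((hlim.eventually_lt_const hlt).and (eventually_gt_atTop 0)).exists
  refine ⟨N, hN0, fun i => ?_⟩
  have hnorm : ‖B ^ N‖ ≤ c ^ N := by
    have h2 : ((‖B ^ N‖₊ : ENNReal) ^ (1 / N : ℝ)) ^ N ≤ ENNReal.ofReal c ^ N :=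
      pow_le_pow_left' hN.le N
    rw [← ENNReal.rpow_natCast, ← ENNReal.rpow_mul, one_div_mul_cancel (by positivity),
      ENNReal.rpow_one, ← ENNReal.ofReal_pow (by linarith)] at h2
    have h3 := ENNReal.toReal_mono ENNReal.ofReal_ne_top h2
    rwa [ENNReal.toReal_ofReal (by positivity)] at h3
  have hpow : B ^ N = (A ^ N).map (fun a : ℝ => (a : ℂ)) := by
    have := (map_pow (Complex.ofRealHom.mapMatrix) A N)
    exact this.symm
  have hrow : ∑ j, ‖(B ^ N) i j‖₊ ≤ ‖B ^ N‖₊ := by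
    rw [Matrix.linfty_opNNNorm_def]
    exact Finset.le_sup (f := fun i => ∑ j, ‖(B ^ N) i j‖₊) (Finset.mem_univ i)
  have hrow' : ∑ j, ‖(B ^ N) i j‖ ≤ ‖B ^ N‖ := by
    have h4 := NNReal.coe_le_coe.2 hrow
    rwa [NNReal.coe_sum] at h4
  refine le_trans (le_of_eq ?_) (hrow'.trans hnorm)
  refine Finset.sum_congr rfl fun j _ => ?_
  rw [hpow]
  simp

end Perron

/-- A nonnegative matrix with spectral radius at most one has a nonnegative probability vector
`u` with `A u ≤ u`. -/
theorem exists_stdSimplex_mulVec_le {n : Type} [Fintype n] [DecidableEq n] [Nonempty n]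
    (A : Matrix n n ℝ) (hA0 : ∀ i j, 0 ≤ A i j) (hA : matrixSpectralRadius A ≤ 1) :
    ∃ u ∈ stdSimplex ℝ n, A.mulVec u ≤ u := by
  have approx : ∀ c : ℝ, 1 < c → ∃ u ∈ stdSimplex ℝ n, A.mulVec u ≤ c • u := by
    intro c hc
    have hc0 : 0 < c := by linarith
    obtain ⟨N, hN0, hN⟩ := exists_pow_row_sum_le A hA hc
    have hpow0 : ∀ k i j, 0 ≤ (A ^ k) i j := by
      intro k
      induction k with
      | zero => intro i j; simp only [pow_zero, Matrix.one_apply]; split_ifs <;> norm_num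
      | succ k ih =>
        intro i j
        rw [pow_succ, Matrix.mul_apply]
        exact Finset.sum_nonneg fun l _ => mul_nonneg (ih i l) (hA0 l j)
    let b : ℕ → n → ℝ := fun k => (c⁻¹ ^ k) • (A ^ k).mulVec 1
    have hb0 : ∀ k i, 0 ≤ b k i := fun k i => by
      simp only [b, Pi.smul_apply, smul_eq_mul, Matrix.mulVec, dotProduct, Pi.one_apply, mul_one]
      exact mul_nonneg (by positivity) (Finset.sum_nonneg fun j _ => hpow0 k i j)
    have hbsucc : ∀ k, A.mulVec (b k) = c • b (k + 1) := fun k => by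
      simp only [b, Matrix.mulVec_smul, Matrix.mulVec_mulVec, ← pow_succ', smul_smul]
      congr 1
      rw [pow_succ]; field_simp
    have hbzero : b 0 = 1 := by simp [b]
    have hbN : b N ≤ 1 := fun i => by
      simp only [b, Pi.smul_apply, smul_eq_mul, Matrix.mulVec, dotProduct, Pi.one_apply, mul_one]
      have h1 : ∑ j, (A ^ N) i j ≤ c ^ N :=
        (Finset.sum_le_sum fun j _ => le_abs_self _).trans (hN i)
      calc c⁻¹ ^ N * ∑ j, (A ^ N) i j ≤ c⁻¹ ^ N * c ^ N := by gcongr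
        _ = 1 := by rw [← mul_pow, inv_mul_cancel₀ hc0.ne', one_pow]
    let w : n → ℝ := ∑ k ∈ Finset.range N, b k
    have hw1 : ∀ i, 1 ≤ w i := fun i => by
      have := Finset.single_le_sum (f := fun k => b k i) (fun k _ => hb0 k i)
        (Finset.mem_range.2 hN0)
      simpa [w, hbzero] using this
    have hAw : A.mulVec w ≤ c • w := by
      have hshift : A.mulVec w = c • ∑ k ∈ Finset.range N, b (k + 1) := by
        simp only [w, Matrix.mulVec_sum, hbsucc, Finset.smul_sum]
      have htel : ∑ k ∈ Finset.range N, b (k + 1) + b 0 = w + b N := by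
        rw [← Finset.sum_range_succ', Finset.sum_range_succ]
      rw [hshift]
      refine smul_le_smul_of_nonneg_left ?_ hc0.le
      rw [hbzero] at htel
      intro i
      have h1 := congrFun htel i
      have h2 := hbN i
      simp only [Pi.add_apply] at h1
      linarith
    let S : ℝ := ∑ i, w i
    have hS : 0 < S := Finset.sum_pos (fun i _ => by linarith [hw1 i]) Finset.univ_nonempty
    refine ⟨S⁻¹ • w, ⟨fun i => ?_, ?_⟩, ?_⟩
    · have := hw1 i
      simp only [Pi.smul_apply, smul_eq_mul]
      positivity
    · simp only [Pi.smul_apply, smul_eq_mul, ← Finset.mul_sum]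
      exact inv_mul_cancel₀ hS.ne'
    · rw [Matrix.mulVec_smul, smul_comm]
      exact smul_le_smul_of_nonneg_left hAw (by positivity)
  choose u hu hAu using fun m : ℕ => approx (1 + 1 / ((m : ℝ) + 1)) (by
    have : 0 < 1 / ((m : ℝ) + 1) := by positivity
    linarith)
  obtain ⟨a, ha, φ, hφ, hlim⟩ := (isCompact_stdSimplex ℝ n).tendsto_subseq hu
  refine ⟨a, ha, ?_⟩
  have h1 : Tendsto (fun m => A.mulVec (u (φ m))) atTop (𝓝 (A.mulVec a)) :=
    ((Continuous.matrix_mulVec continuous_const continuous_id).tendsto a).comp hlim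
  have h2 : Tendsto (fun m => (1 + 1 / ((φ m : ℝ) + 1)) • u (φ m)) atTop (𝓝 ((1 + 0 : ℝ) • a)) :=
    (((tendsto_one_div_add_atTop_nhds_zero_nat (𝕜 := ℝ)).comp hφ.tendsto_atTop).const_add
      1).smul hlim
  have h3 := le_of_tendsto_of_tendsto' h1 h2 fun m => hAu (φ m)
  simpa using h3

namespace MWGraph

variable {d : ℕ} {V E : Type} [Fintype V] [Fintype E]

theorem Amatrix_mulVec_apply [DecidableEq V] (G : MWGraph d V E) (s : ℝ) (u : V → ℝ) (i : V) :
    (G.Amatrix s).mulVec u i = ∑ e with G.init e = i, G.r e ^ s * u (G.term e) := by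
  simp only [Amatrix, Matrix.mulVec, dotProduct, Matrix.of_apply, Finset.sum_mul]
  rw [Finset.sum_comm, Finset.sum_filter]
  refine Finset.sum_congr rfl fun e _ => ?_
  by_cases h : G.init e = i <;> simp [h, ite_mul]

/-- A strongly connected Mauldin–Williams graph has a strictly positive vector that is
subinvariant under the matrix at the exponent `s₀`. -/
theorem exists_pos_subinvariant [DecidableEq V] (G : MWGraph d V E) (hSC : G.StronglyConnected)
    {s : ℝ} (hs : IsS0 G s) :
    ∃ v : V → ℝ, (∀ i, 0 < v i) ∧
      ∀ i, ∑ e with G.init e = i, G.r e ^ s * v (G.term e) ≤ v i := by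
  cases isEmpty_or_nonempty V
  · exact ⟨fun _ => 1, isEmptyElim, isEmptyElim⟩
  have hA0 : ∀ i j, 0 ≤ G.Amatrix s i j := fun i j => by
    refine Finset.sum_nonneg fun e _ => ?_
    have := G.r_pos e
    split_ifs <;> positivity
  obtain ⟨u, ⟨hu0, hu1⟩, hu⟩ := exists_stdSimplex_mulVec_le _ hA0 hs.2.le
  have hsub : ∀ i, ∑ e with G.init e = i, G.r e ^ s * u (G.term e) ≤ u i := fun i => by
    rw [← Amatrix_mulVec_apply]; exact hu i
  refine ⟨u, fun i => ?_, hsub⟩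
  obtain ⟨j, hj⟩ : ∃ j, 0 < u j := by
    by_contra! h
    have : ∑ j, u j ≤ 0 := Finset.sum_nonpos fun j _ => h j
    linarith
  obtain ⟨γ, -, hγ, hγj⟩ := hSC i j
  clear hSC
  induction γ generalizing i with
  | nil => rw [← hγj] at hj; exact hj
  | cons e γ ih =>
    have h1 := ih (G.term e) hγ.2 hγj
    have h2 := Finset.single_le_sum (f := fun e => G.r e ^ s * u (G.term e))
      (fun e _ => mul_nonneg (Real.rpow_nonneg (G.r_pos e).le s) (hu0 _))
      (show e ∈ Finset.univ.filter fun e => G.init e = i by simpa using hγ.1)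
    exact (mul_pos (Real.rpow_pos_of_pos (G.r_pos e) s) h1).trans_le (h2.trans (hsub i))

end MWGraph

section CoveringNumber

variable {d : ℕ} {A B : Set (Pt d)} {r : ℝ}

theorem coveringNumber_le_card {ι : Type*} [Fintype ι] (c : ι → Pt d)
    (h : A ⊆ ⋃ i, closedBall (c i) r) : coveringNumber A r ≤ Fintype.card ι := by
  refine Nat.sInf_le ⟨c ∘ (Fintype.equivFin ι).symm, h.trans ?_⟩
  exact iUnion_subset fun i => by
    simpa using subset_iUnion
      (fun k => closedBall ((c ∘ (Fintype.equivFin ι).symm) k) r) (Fintype.equivFin ι i)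

theorem exists_coveringNumber (hA : Bornology.IsBounded A) (hr : 0 < r) :
    ∃ c : Fin (coveringNumber A r) → Pt d, A ⊆ ⋃ i, closedBall (c i) r := by
  refine Nat.sInf_mem (s := {k : ℕ | ∃ c : Fin k → Pt d, A ⊆ ⋃ i, closedBall (c i) r}) ?_
  obtain ⟨t, ht, hAt⟩ := Metric.totallyBounded_iff.1 
    (hA.isCompact_closure.totallyBounded.subset subset_closure) r hr
  have := ht.fintype
  refine ⟨Fintype.card t, fun k => ((Fintype.equivFin t).symm k : Pt d), fun x hx => ?_⟩
  obtain ⟨y, hy, hxy⟩ := mem_iUnion₂.1 (hAt hx)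
  exact mem_iUnion.2 ⟨Fintype.equivFin t ⟨y, hy⟩, by simpa using (mem_ball.1 hxy).le⟩

theorem coveringNumber_mono (hB : Bornology.IsBounded B) (hAB : A ⊆ B) {r' : ℝ} (hr : 0 < r)
    (hrr' : r ≤ r') : coveringNumber A r' ≤ coveringNumber B r := by
  obtain ⟨c, hc⟩ := exists_coveringNumber hB hr
  simpa using coveringNumber_le_card c
    (hAB.trans (hc.trans (iUnion_mono fun i => closedBall_subset_closedBall hrr')))

theorem coveringNumber_empty : coveringNumber (∅ : Set (Pt d)) r = 0 := by
  simpa using coveringNumber_le_card (A := (∅ : Set (Pt d))) (r := r) (ι := Fin 0)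
    (fun _ => 0) (empty_subset _)

theorem coveringNumber_union_le (hA : Bornology.IsBounded A) (hB : Bornology.IsBounded B)
    (hr : 0 < r) : coveringNumber (A ∪ B) r ≤ coveringNumber A r + coveringNumber B r := by
  obtain ⟨c, hc⟩ := exists_coveringNumber hA hr
  obtain ⟨c', hc'⟩ := exists_coveringNumber hB hr
  have := coveringNumber_le_card (A := A ∪ B) (r := r) (Sum.elim c c') (by
    rw [iUnion_sum]
    exact union_subset_union hc hc')
  simpa using this

theorem coveringNumber_biUnion_le {ι : Type*} (s : Finset ι) (T : ι → Set (Pt d))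
    (hT : ∀ i, Bornology.IsBounded (T i)) (hr : 0 < r) :
    coveringNumber (⋃ i ∈ s, T i) r ≤ ∑ i ∈ s, coveringNumber (T i) r := by
  classical
  induction s using Finset.induction_on with
  | empty => simp [coveringNumber_empty]
  | insert a s ha ih =>
    rw [Finset.set_biUnion_insert, Finset.sum_insert ha]
    refine (coveringNumber_union_le (hT a) ?_ hr).trans (by gcongr)
    exact (Bornology.isBounded_biUnion s.finite_toSet).2 fun i _ => hT i

/-- Removing from a cover the balls not used for `A` and adding an optimal cover of the rest. -/
theorem coveringNumber_le_card_add {ι : Type*} (I : Finset ι) (c : ι → Pt d)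
    (hB : Bornology.IsBounded B) (hr : 0 < r)
    (h : ∀ x ∈ A, (∃ i ∈ I, x ∈ closedBall (c i) r) ∨ x ∈ B) :
    coveringNumber A r ≤ I.card + coveringNumber B r := by
  obtain ⟨c', hc'⟩ := exists_coveringNumber hB hr
  have := coveringNumber_le_card (A := A) (r := r) (Sum.elim (fun i : I => c i) c') (by
    intro x hx
    rw [iUnion_sum]
    rcases h x hx with ⟨i, hi, hxi⟩ | hxB
    · exact Or.inl (mem_iUnion.2 ⟨⟨i, hi⟩, hxi⟩)
    · exact Or.inr (hc' hxB))
  simpa using this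

end CoveringNumber

namespace MWGraph

variable {d : ℕ} {V E : Type} [Fintype V] [Fintype E] (G : MWGraph d V E)

theorem S_continuous (e : E) : Continuous (G.S e) :=
  (LipschitzWith.of_dist_le_mul (K := ⟨G.r e, (G.r_pos e).le⟩)
    fun x y => (G.S_sim e x y).le).continuous

theorem S_surjective (e : E) : Function.Surjective (G.S e) := by
  have hr := G.r_pos e
  let T : Pt d → Pt d := fun x => (G.r e)⁻¹ • G.S e x
  have hT : Isometry T := Isometry.of_dist_eq fun x y => by
    simp only [T, dist_smul₀, G.S_sim, Real.norm_eq_abs, abs_inv, abs_of_pos hr]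
    field_simp
  let T' := hT.affineIsometryOfStrictConvexSpace
  have hsurj : Function.Surjective T'.toAffineMap :=
    (AffineMap.linear_surjective_iff _).1 (LinearMap.injective_iff_surjective.1
      ((AffineMap.linear_injective_iff _).2 T'.injective))
  intro y
  obtain ⟨x, hx⟩ := hsurj ((G.r e)⁻¹ • y)
  have hx' : (G.r e)⁻¹ • G.S e x = (G.r e)⁻¹ • y := hx
  exact ⟨x, smul_right_injective _ (inv_ne_zero hr.ne') hx'⟩

theorem coveringNumber_image_S_le (e : E) {A : Set (Pt d)} (hA : Bornology.IsBounded A) {r : ℝ}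
    (hr : 0 < r) : coveringNumber (G.S e '' A) r ≤ coveringNumber A (r / G.r e) := by
  have hre := G.r_pos e
  obtain ⟨c, hc⟩ := exists_coveringNumber hA (div_pos hr hre)
  have := coveringNumber_le_card (A := G.S e '' A) (r := r) (G.S e ∘ c) (by
    rintro _ ⟨x, hx, rfl⟩
    obtain ⟨i, hi⟩ := mem_iUnion.1 (hc hx)
    refine mem_iUnion.2 ⟨i, ?_⟩
    rw [mem_closedBall, Function.comp_apply, G.S_sim]
    exact (le_div_iff₀' hre).1 hi)
  simpa using this

theorem exists_ratio_le : ∃ q : ℝ, 0 < q ∧ q < 1 ∧ ∀ e, G.r e ≤ q := by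
  rcases isEmpty_or_nonempty E with h | h
  · exact ⟨1 / 2, by norm_num, by norm_num, isEmptyElim⟩
  · obtain ⟨e, he⟩ := Finite.exists_max G.r
    exact ⟨G.r e, G.r_pos e, G.r_lt_one e, he⟩

variable {G} {C K KC U : V → Set (Pt d)}

theorem IsInhomAttractor.image_subset (hKC : G.IsInhomAttractor C KC) (e : E) :
    G.S e '' KC (G.term e) ⊆ KC (G.init e) := by
  rw [hKC.2.2 (G.init e)]
  exact subset_union_of_subset_left (subset_biUnion_of_mem (u := fun e => G.S e '' KC (G.term e))
    (show e ∈ {e' | G.init e' = G.init e} from rfl)) _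

theorem IsInhomAttractor.mem_cases (hKC : G.IsInhomAttractor C KC) {i : V} {z : Pt d}
    (hz : z ∈ KC i) :
    (∃ e, G.init e = i ∧ ∃ w ∈ KC (G.term e), G.S e w = z) ∨ z ∈ C i := by
  rw [hKC.2.2 i] at hz
  simpa only [mem_union, mem_iUnion, exists_prop, mem_ofPred_eq, mem_image] using hz

theorem IsInhomAttractor.isBounded (hKC : G.IsInhomAttractor C KC) (i : V) :
    Bornology.IsBounded (KC i) := (hKC.1 i).isBounded

theorem IsOSCWith.mem_of_mem (hU : G.IsOSCWith U) (e : E) {z : Pt d} (hz : z ∈ U (G.term e)) :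
    G.S e z ∈ U (G.init e) :=
  hU.2.2.2.2.1 _ (mem_biUnion (show e ∈ {e' | G.init e' = G.init e} from rfl)
    (mem_image_of_mem _ hz))

/-- The inhomogeneous attractor lies in the closure of the open sets. -/
theorem IsInhomAttractor.subset_closure (hKC : G.IsInhomAttractor C KC) (hU : G.IsOSCWith U)
    (hCU : ∀ i, C i ⊆ closure (U i)) (i : V) : KC i ⊆ closure (U i) := by
  obtain ⟨q, hq0, hq1, hq⟩ := G.exists_ratio_le
  obtain ⟨D, hD⟩ : ∃ D : ℝ, ∀ i, ∀ z ∈ KC i, infDist z (U i) ≤ D := by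
    have : ∀ i, ∃ D : ℝ, ∀ z ∈ KC i, infDist z (U i) ≤ D := fun i => by
      obtain ⟨D, hD⟩ := (hKC.1 i).bddAbove_image (continuous_infDist_pt (U i)).continuousOn
      exact ⟨D, fun z hz => hD (mem_image_of_mem _ hz)⟩
    choose D hD using this
    obtain ⟨D', hD'⟩ := (Set.finite_range D).bddAbove
    exact ⟨D', fun i z hz => (hD i z hz).trans (hD' (mem_range_self i))⟩
  have key : ∀ n : ℕ, ∀ i, ∀ z ∈ KC i, infDist z (U i) ≤ q ^ n * |D| := by
    intro n
    induction n with
    | zero => intro i z hz; simpa using (hD i z hz).trans (le_abs_self D)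
    | succ n ih =>
      intro i z hz
      rcases hKC.mem_cases hz with ⟨e, rfl, w, hw, rfl⟩ | hzC
      · refine le_of_forall_pos_lt_add fun ε hε => ?_
        obtain ⟨u, hu, hwu⟩ := (infDist_lt_iff (hU.1 (G.term e))).1
          ((ih _ w hw).trans_lt (lt_add_of_pos_right _ hε))
        calc infDist (G.S e w) (U (G.init e)) ≤ dist (G.S e w) (G.S e u) :=
              infDist_le_dist_of_mem (hU.mem_of_mem e hu)
          _ = G.r e * dist w u := G.S_sim e w u
          _ ≤ q * dist w u := by gcongr; exact hq e
          _ < q * (q ^ n * |D| + ε) := by gcongr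
          _ ≤ q ^ (n + 1) * |D| + ε := by rw [pow_succ']; nlinarith
      · rw [(mem_closure_iff_infDist_zero (hU.1 i)).1 (hCU i hzC)]
        positivity
  intro z hz
  rw [mem_closure_iff_infDist_zero (hU.1 i)]
  refine le_antisymm ?_ infDist_nonneg
  have hlim : Tendsto (fun n : ℕ => q ^ n * |D|) atTop (𝓝 0) := by
    simpa using (tendsto_pow_atTop_nhds_zero_of_lt_one hq0.le hq1).mul_const |D|
  exact ge_of_tendsto' hlim fun n => key n i z hz

theorem dist_pathMap_le (G : MWGraph d V E) {q : ℝ} (hq0 : 0 ≤ q) (hq : ∀ e, G.r e ≤ q)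
    (γ : List E) (x y : Pt d) :
    dist (G.pathMap γ x) (G.pathMap γ y) ≤ q ^ γ.length * dist x y := by
  induction γ with
  | nil => simp [pathMap]
  | cons e γ ih =>
    simp only [pathMap, Function.comp_apply, G.S_sim, List.length_cons, pow_succ', mul_assoc]
    gcongr
    exact hq e

theorem IsAttractor.exists_path (hK : G.IsAttractor K) (n : ℕ) {i : V} {z : Pt d}
    (hz : z ∈ K i) : ∃ γ : List E, γ.length = n ∧ G.IsPathFrom i γ ∧
      ∃ w ∈ K (G.pathTerm i γ), G.pathMap γ w = z := by
  induction n generalizing i z with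
  | zero => exact ⟨[], rfl, trivial, z, hz, rfl⟩
  | succ n ih =>
    rw [hK.2.2 i] at hz
    simp only [mem_iUnion, exists_prop, mem_ofPred_eq, mem_image] at hz
    obtain ⟨e, he, w, hw, rfl⟩ := hz
    obtain ⟨γ, hlen, hγ, u, hu, rfl⟩ := ih hw
    exact ⟨e :: γ, by simp [hlen], ⟨he, hγ⟩, u, hu, rfl⟩

/-- From every vertex some cylinder of the inhomogeneous attractor stays at positive distance
from the complement of the open set. -/
theorem exists_interior_path (hK : G.IsAttractor K) (hKC : G.IsInhomAttractor C KC)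
    (hU : G.IsOSCWith U) (hUK : ∀ i, (U i ∩ K i).Nonempty) (i : V) :
    ∃ γ : List E, G.IsPathFrom i γ ∧ ∃ ε > 0,
      ∀ z ∈ G.pathMap γ '' KC (G.pathTerm i γ), ∀ y ∉ U i, ε ≤ dist z y := by
  obtain ⟨q, hq0, hq1, hq⟩ := G.exists_ratio_le
  obtain ⟨D, hD⟩ : ∃ D : ℝ, ∀ j, ∀ w ∈ K j, ∀ u ∈ KC j, dist w u ≤ D := by
    have : ∀ j, ∃ D : ℝ, ∀ w ∈ K j, ∀ u ∈ KC j, dist w u ≤ D := fun j => by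
      obtain ⟨D, hD⟩ := isBounded_iff.1 ((hK.1 j).isBounded.union (hKC.isBounded j))
      exact ⟨D, fun w hw u hu => hD (Or.inl hw) (Or.inr hu)⟩
    choose D hD using this
    obtain ⟨D', hD'⟩ := (Set.finite_range D).bddAbove
    exact ⟨D', fun j w hw u hu => (hD j w hw u hu).trans (hD' (mem_range_self j))⟩
  obtain ⟨z, hzU, hzK⟩ := hUK i
  obtain ⟨ε, hε, hball⟩ := Metric.isOpen_iff.1 (hU.2.1 i) z hzU
  obtain ⟨n, hn⟩ : ∃ n : ℕ, q ^ n * D < ε / 2 := by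
    have hlim : Tendsto (fun n : ℕ => q ^ n * D) atTop (𝓝 0) := by
      simpa using (tendsto_pow_atTop_nhds_zero_of_lt_one hq0.le hq1).mul_const D
    exact (hlim.eventually_lt_const (half_pos hε)).exists
  obtain ⟨γ, hlen, hγ, w, hw, rfl⟩ := hK.exists_path n hzK
  refine ⟨γ, hγ, ε / 2, half_pos hε, ?_⟩
  rintro _ ⟨u, hu, rfl⟩ y hy
  have h1 : dist (G.pathMap γ w) (G.pathMap γ u) ≤ q ^ n * D := by
    refine (G.dist_pathMap_le hq0.le hq γ w u).trans ?_
    rw [hlen]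
    gcongr
    exact hD _ w hw u hu
  have h2 : ε ≤ dist y (G.pathMap γ w) := not_lt.1 fun h => hy (hball h)
  have h3 := dist_triangle_left y (G.pathMap γ w) (G.pathMap γ u)
  have h4 := dist_comm (G.pathMap γ w) (G.pathMap γ u)
  linarith

/-- Points of distinct first-level pieces are separated by the boundary of the open pieces. -/
theorem notMem_image_of_mem_image (hKC : G.IsInhomAttractor C KC) (hU : G.IsOSCWith U)
    (hCU : ∀ i, C i ⊆ closure (U i)) {e e' : E} (hee' : G.init e = G.init e') (hne : e ≠ e')
    {y : Pt d} (hy : y ∈ G.S e' '' KC (G.term e')) : y ∉ G.S e '' U (G.term e) := by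
  rintro ⟨u, hu, rfl⟩
  obtain ⟨η, hη, hball⟩ := Metric.isOpen_iff.1 (hU.2.1 _) u hu
  have hcl : G.S e u ∈ closure (G.S e' '' U (G.term e')) := by
    obtain ⟨w, hw, hwu⟩ := hy
    rw [← hwu]
    exact image_closure_subset_closure_image (G.S_continuous e')
      (mem_image_of_mem _ (hKC.subset_closure hU hCU _ hw))
  obtain ⟨p, hp, hpd⟩ := Metric.mem_closure_iff.1 hcl (G.r e * η) (mul_pos (G.r_pos e) hη)
  obtain ⟨x, rfl⟩ := G.S_surjective e p
  rw [G.S_sim, mul_lt_mul_iff_right₀ (G.r_pos e), dist_comm] at hpd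
  exact (hU.2.2.2.2.2 e e' hee' hne).le_bot ⟨mem_image_of_mem _ (hball hpd), hp⟩

end MWGraph

namespace MWGraph

variable {d : ℕ} {V E : Type} [Fintype V] [Fintype E]

/-- A renewal inequality along the edges of `G` in which one path from each vertex is discarded
has solutions with bounded sums along the arithmetic progressions `x, x - 1, x - 2, …`. -/
theorem sum_range_le_of_renewal [DecidableEq V] (G : MWGraph d V E) {s : ℝ} (hs : 0 ≤ s)
    {v : V → ℝ} (hv : ∀ i, 0 < v i)
    (hsub : ∀ i, ∑ e with G.init e = i, G.r e ^ s * v (G.term e) ≤ v i)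
    (f : V → Set (Pt d) → ℝ → ℝ) (h : V → ℝ → ℝ) (Z : V → Set (Pt d)) (γ : V → List E)
    (hγ : ∀ i, G.IsPathFrom i (γ i))
    (hf_neg : ∀ j Q t, t < 0 → f j Q t = 0)
    (hf_self : ∀ j t, f j (Z j) t = 0)
    (hf_step : ∀ j Q (Qe : E → Set (Pt d)) t, (∀ e, G.S e '' Qe e ⊆ Q) →
      f j Q t ≤ ∑ e with G.init e = j,
        G.r e ^ s * f (G.term e) (Qe e) (t + Real.log (G.r e)) + h j t)
    (hf_discard : ∀ j t,
      f j ∅ t ≤ f j (G.pathMap (γ j) '' Z (G.pathTerm j (γ j))) t + h j t)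
    {H : ℝ} (hH0 : 0 ≤ H) (hH : ∀ j x m, ∑ k ∈ Finset.range m, h j (x - (k : ℕ)) ≤ H) :
    ∃ B : ℝ, ∀ j x m, ∑ k ∈ Finset.range m, f j ∅ (x - (k : ℕ)) ≤ B * v j := by
  classical
  have hratio : ∀ δ : List E, 0 < G.pathRatio δ := fun δ =>
    List.prod_pos (by simpa using fun e _ => G.r_pos e)
  obtain ⟨q, hq0, hq1, hq⟩ := G.exists_ratio_le
  set c : ℝ := -Real.log q with hc
  have hc0 : 0 < c := by have := Real.log_neg hq0 hq1; linarith
  have hlog : ∀ e, Real.log (G.r e) ≤ -c := fun e => by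
    rw [hc, neg_neg]; exact Real.log_le_log (G.r_pos e) (hq e)
  let gap : V → ℝ := fun j => G.pathRatio (γ j) ^ s * v (G.pathTerm j (γ j))
  have hgap : ∀ j, 0 < gap j := fun j => mul_pos (Real.rpow_pos_of_pos (hratio _) s) (hv _)
  obtain ⟨B, hB0, hB⟩ : ∃ B : ℝ, 0 ≤ B ∧ ∀ j, ((γ j).length + 1) * H ≤ B * gap j := by
    have hnn : ∀ j, 0 ≤ ((γ j).length + 1) * H / gap j := fun j =>
      div_nonneg (by positivity) (hgap j).le
    refine ⟨∑ j, ((γ j).length + 1) * H / gap j, Finset.sum_nonneg fun j _ => hnn j, fun j => ?_⟩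
    exact (div_le_iff₀ (hgap j)).1
      (Finset.single_le_sum (fun j _ => hnn j) (Finset.mem_univ j))
  have path_bound : ∀ x : ℝ,
      (∀ j y m, y ≤ x - c → ∑ k ∈ Finset.range m, f j ∅ (y - (k : ℕ)) ≤ B * v j) →
      ∀ (δ : List E) (j : V) (y : ℝ) (m : ℕ), G.IsPathFrom j δ → y ≤ x →
        ∑ k ∈ Finset.range m, f j (G.pathMap δ '' Z (G.pathTerm j δ)) (y - (k : ℕ)) ≤
          B * (v j - G.pathRatio δ ^ s * v (G.pathTerm j δ)) + δ.length * H := by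
    intro x ih δ
    induction δ with
    | nil =>
      intro j y m _ _
      simp [pathMap, pathTerm, pathRatio, hf_self]
    | cons e δ ihδ =>
      intro j y m hδ hy
      set P := G.pathMap δ '' Z (G.pathTerm (G.term e) δ) with hP
      let Qe : E → Set (Pt d) := fun e' => if e' = e then P else ∅
      have himage : G.pathMap (e :: δ) '' Z (G.pathTerm j (e :: δ)) = G.S e '' P := by
        simp only [pathMap, pathTerm, hP, image_comp]
      have hQe : ∀ e', G.S e' '' Qe e' ⊆ G.S e '' P := fun e' => by
        by_cases he : e' = e <;> simp [Qe, he]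
      let excess : E → ℝ := fun e' => if e' = e then
        -(B * (G.pathRatio δ ^ s * v (G.pathTerm (G.term e) δ))) + δ.length * H else 0
      have hterm : ∀ e', ∑ k ∈ Finset.range m,
          f (G.term e') (Qe e') (y - (k : ℕ) + Real.log (G.r e')) ≤
            B * v (G.term e') + excess e' := by
        intro e'
        have hshift : ∀ k : ℕ, y - (k : ℝ) + Real.log (G.r e') =
            (y + Real.log (G.r e')) - k := fun k => by ring
        simp only [hshift]
        have hle := hlog e'
        by_cases he : e' = e
        · subst he
          have := ihδ (G.term e') (y + Real.log (G.r e')) m hδ.2 (by linarith)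
          simp only [Qe, excess, if_true]
          linarith
        · simp only [Qe, excess, if_neg he, add_zero]
          exact ih _ _ _ (by linarith)
      have hre1 := Real.rpow_le_one (G.r_pos e).le (G.r_lt_one e).le hs
      have hcons : G.pathRatio (e :: δ) ^ s = G.r e ^ s * G.pathRatio δ ^ s := by
        rw [← Real.mul_rpow (G.r_pos e).le (hratio δ).le]
        simp [pathRatio]
      rw [himage, hcons]
      calc ∑ k ∈ Finset.range m, f j (G.S e '' P) (y - (k : ℕ))
          ≤ ∑ k ∈ Finset.range m, (∑ e' with G.init e' = j,
              G.r e' ^ s * f (G.term e') (Qe e') (y - (k : ℕ) + Real.log (G.r e'))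
              + h j (y - (k : ℕ))) := Finset.sum_le_sum fun k _ => hf_step _ _ _ _ hQe
        _ = ∑ e' with G.init e' = j, G.r e' ^ s * ∑ k ∈ Finset.range m,
              f (G.term e') (Qe e') (y - (k : ℕ) + Real.log (G.r e'))
              + ∑ k ∈ Finset.range m, h j (y - (k : ℕ)) := by
            rw [Finset.sum_add_distrib, Finset.sum_comm]
            simp only [Finset.mul_sum]
        _ ≤ ∑ e' with G.init e' = j, G.r e' ^ s * (B * v (G.term e') + excess e') + H := by
            gcongr with e' _
            · exact Real.rpow_nonneg (G.r_pos e').le s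
            · exact hterm e'
            · exact hH j y m
        _ = B * ∑ e' with G.init e' = j, G.r e' ^ s * v (G.term e') + G.r e ^ s *
              (-(B * (G.pathRatio δ ^ s * v (G.pathTerm (G.term e) δ))) + δ.length * H) + H := by
            simp only [mul_add, Finset.sum_add_distrib, excess, mul_ite, mul_zero]
            rw [Finset.sum_ite_eq', if_pos (by simpa using hδ.1), Finset.mul_sum]
            congr 2
            exact Finset.sum_congr rfl fun e' _ => mul_left_comm _ _ _
        _ ≤ B * v j + (-(B * (G.r e ^ s * G.pathRatio δ ^ s * v (G.pathTerm (G.term e) δ)))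
              + δ.length * H) + H := by
            have h1 := mul_le_mul_of_nonneg_left (hsub j) hB0
            have h2 : G.r e ^ s * (δ.length * H) ≤ 1 * (δ.length * H) := by gcongr
            linarith
        _ = _ := by
            simp only [pathTerm, List.length_cons]
            push_cast
            ring
  have main : ∀ n : ℕ, ∀ j x m, x < n * c →
      ∑ k ∈ Finset.range m, f j ∅ (x - (k : ℕ)) ≤ B * v j := by
    intro n
    induction n with
    | zero =>
      intro j x m hx
      rw [Finset.sum_eq_zero]
      · exact mul_nonneg hB0 (hv j).le
      · intro k _
        have : (0 : ℝ) ≤ k := k.cast_nonneg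
        exact hf_neg _ _ _ (by simp at hx; linarith)
    | succ n ihn =>
      intro j x m hx
      have h1 := path_bound x (fun i y m hy => ihn i y m (by push_cast at hx; linarith))
        (γ j) j x m (hγ j) le_rfl
      calc ∑ k ∈ Finset.range m, f j ∅ (x - (k : ℕ))
          ≤ ∑ k ∈ Finset.range m, (f j (G.pathMap (γ j) '' Z (G.pathTerm j (γ j))) (x - (k : ℕ))
              + h j (x - (k : ℕ))) := Finset.sum_le_sum fun k _ => hf_discard _ _
        _ ≤ B * (v j - gap j) + (γ j).length * H + H := by
            rw [Finset.sum_add_distrib]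
            exact add_le_add h1 (hH j x m)
        _ ≤ B * v j := by linarith [hB j]
  refine ⟨B, fun j x m => ?_⟩
  obtain ⟨n, hn⟩ := exists_nat_gt (x / c)
  exact main n j x m ((div_lt_iff₀ hc0).1 hn)

end MWGraph

/-- Sums along arithmetic progressions of step one are controlled by an integral. -/
theorem exists_sum_range_le_of_lintegral_lt_top {g q : ℝ → ℝ} {c : ℝ} (hg : ∀ t, 0 ≤ g t)
    (hc : 0 ≤ c) (hneg : ∀ t, t < 0 → g t = 0)
    (hle : ∀ t, 0 ≤ t → ∀ u ∈ Ioo t (t + 1), g t ≤ c * q u)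
    (hq : ∫⁻ t in Ioi (0 : ℝ), ENNReal.ofReal (q t) < ⊤) :
    ∃ H : ℝ, 0 ≤ H ∧ ∀ x (m : ℕ), ∑ k ∈ Finset.range m, g (x - (k : ℕ)) ≤ H := by
  set J := ∫⁻ t in Ioi (0 : ℝ), ENNReal.ofReal c * ENNReal.ofReal (q t) with hJ
  have hJtop : J ≠ ⊤ := by
    rw [hJ, lintegral_const_mul' _ _ ENNReal.ofReal_ne_top]
    exact ENNReal.mul_ne_top ENNReal.ofReal_ne_top hq.ne
  refine ⟨J.toReal, ENNReal.toReal_nonneg, fun x m => ?_⟩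
  rw [← ENNReal.ofReal_le_iff_le_toReal hJtop, ENNReal.ofReal_sum_of_nonneg fun k _ => hg _]
  let I : ℕ → Set ℝ := fun k => Ioo (x - k) (x - k + 1) ∩ Ioi 0
  have hterm : ∀ k : ℕ, ENNReal.ofReal (g (x - k)) ≤
      ∫⁻ t in I k, ENNReal.ofReal c * ENNReal.ofReal (q t) := by
    intro k
    rcases lt_or_ge (x - (k : ℝ)) 0 with hk | hk
    · simp [hneg _ hk]
    · have hI : I k = Ioo (x - k) (x - k + 1) :=
        inter_eq_left.2 fun t ht => hk.trans_lt ht.1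
      calc ENNReal.ofReal (g (x - k))
          = ∫⁻ _ in Ioo (x - (k : ℝ)) (x - k + 1), ENNReal.ofReal (g (x - k)) := by
            simp
        _ ≤ ∫⁻ t in Ioo (x - (k : ℝ)) (x - k + 1), ENNReal.ofReal c * ENNReal.ofReal (q t) := by
            refine setLIntegral_mono' measurableSet_Ioo fun u hu => ?_
            rw [← ENNReal.ofReal_mul hc]
            exact ENNReal.ofReal_le_ofReal (hle _ hk u hu)
        _ = _ := by rw [hI]
  have hdisj : Set.PairwiseDisjoint (↑(Finset.range m) : Set ℕ) I := by
    intro k _ l _ hkl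
    refine Set.disjoint_left.2 fun t ht ht' => ?_
    obtain ⟨⟨h1, h2⟩, -⟩ := ht
    obtain ⟨⟨h3, h4⟩, -⟩ := ht'
    rcases Nat.lt_or_gt_of_ne hkl with h | h
    · have : (k : ℝ) + 1 ≤ l := by exact_mod_cast h
      linarith
    · have : (l : ℝ) + 1 ≤ k := by exact_mod_cast h
      linarith
  calc ∑ k ∈ Finset.range m, ENNReal.ofReal (g (x - k))
      ≤ ∑ k ∈ Finset.range m, ∫⁻ t in I k, ENNReal.ofReal c * ENNReal.ofReal (q t) :=
        Finset.sum_le_sum fun k _ => hterm k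
    _ = ∫⁻ t in ⋃ k ∈ Finset.range m, I k, ENNReal.ofReal c * ENNReal.ofReal (q t) :=
        (lintegral_biUnion_finset hdisj
          (fun k _ => measurableSet_Ioo.inter measurableSet_Ioi) _).symm
    _ ≤ J := lintegral_mono_set (iUnion₂_subset fun k _ => inter_subset_right)

/-- The weighted covering number of `A` at scale `e^{-t}`, plus a compactly supported term, cut
off at negative times. -/
def condWeight {d : ℕ} (A : Set (Pt d)) (s M T t : ℝ) : ℝ :=
  if t < 0 then 0 else
    Real.exp (-s * t) * coveringNumber A (Real.exp (-t)) + if t ≤ T then M else 0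

theorem condWeight_nonneg {d : ℕ} (A : Set (Pt d)) {s M : ℝ} (hM : 0 ≤ M) (T t : ℝ) :
    0 ≤ condWeight A s M T t := by
  unfold condWeight
  split_ifs <;> positivity

theorem exists_sum_condWeight_le {d : ℕ} {A : Set (Pt d)} (hA : Bornology.IsBounded A)
    {s M : ℝ} (hs : 0 ≤ s) (hM : 0 ≤ M) (T : ℝ)
    (hint : ∫⁻ t in Ioi (0 : ℝ),
      ENNReal.ofReal (Real.exp (-s * t) * (coveringNumber A (Real.exp (-t)) : ℝ)) < ⊤) :
    ∃ H : ℝ, 0 ≤ H ∧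
      ∀ x (m : ℕ), ∑ k ∈ Finset.range m, condWeight A s M T (x - (k : ℕ)) ≤ H := by
  obtain ⟨H₁, hH₁, h₁⟩ := exists_sum_range_le_of_lintegral_lt_top
    (g := fun t => if t < 0 then 0 else Real.exp (-s * t) * coveringNumber A (Real.exp (-t)))
    (c := Real.exp s) (fun t => by split_ifs <;> positivity) (by positivity)
    (fun t ht => if_pos ht) (fun t ht u hu => by
      rw [if_neg ht.not_gt, ← mul_assoc, ← Real.exp_add]
      gcongr
      · nlinarith [hu.1, hu.2]
      · exact coveringNumber_mono hA subset_rfl (Real.exp_pos _)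
          (Real.exp_le_exp.2 (by linarith [hu.1]))) hint
  obtain ⟨H₂, hH₂, h₂⟩ := exists_sum_range_le_of_lintegral_lt_top
    (g := fun t => if t < 0 then 0 else if t ≤ T then M else 0) (q := fun t => Real.exp (-t))
    (c := M * Real.exp (T + 1)) (fun t => by split_ifs <;> positivity) (by positivity)
    (fun t ht => if_pos ht) (fun t ht u hu => by
      rw [if_neg ht.not_gt, mul_assoc, ← Real.exp_add]
      split_ifs with htT
      · exact le_mul_of_one_le_right hM (Real.one_le_exp (by linarith [hu.2]))
      · positivity)
    (integrableOn_exp_neg_Ioi 0).lintegral_lt_top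
  refine ⟨H₁ + H₂, by positivity, fun x m => ?_⟩
  refine le_trans (le_of_eq ?_) (add_le_add (h₁ x m) (h₂ x m))
  rw [← Finset.sum_add_distrib]
  refine Finset.sum_congr rfl fun k _ => ?_
  unfold condWeight
  split_ifs <;> simp

namespace MWGraph

variable {d : ℕ} {V E : Type} [Fintype V] [Fintype E]

/-- The points of `Z` outside `Q` at distance at most `a * e^{-t}` from the complement of `W`. -/
def boundarySet (Z W : Set (Pt d)) (a : ℝ) (Q : Set (Pt d)) (t : ℝ) : Set (Pt d) :=
  {z | z ∈ Z ∧ z ∉ Q ∧ ∃ y ∉ W, dist z y ≤ a * Real.exp (-t)}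

/-- The weighted covering number of `boundarySet`, cut off at negative times. -/
def boundaryWeight (s : ℝ) (Z W : Set (Pt d)) (a : ℝ) (Q : Set (Pt d)) (t : ℝ) : ℝ :=
  if t < 0 then 0 else
    Real.exp (-s * t) * coveringNumber (boundarySet Z W a Q t) (Real.exp (-t))

theorem boundarySet_subset (Z W : Set (Pt d)) (a : ℝ) (Q : Set (Pt d)) (t : ℝ) :
    boundarySet Z W a Q t ⊆ Z := fun _ hz => hz.1

theorem boundaryWeight_nonneg (s : ℝ) (Z W : Set (Pt d)) (a : ℝ) (Q : Set (Pt d)) (t : ℝ) :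
    0 ≤ boundaryWeight s Z W a Q t := by
  unfold boundaryWeight
  split_ifs <;> positivity

theorem exp_neg_add_log (G : MWGraph d V E) (e : E) (t : ℝ) :
    Real.exp (-(t + Real.log (G.r e))) = Real.exp (-t) / G.r e := by
  rw [neg_add, Real.exp_add, Real.exp_neg (Real.log _), Real.exp_log (G.r_pos e), div_eq_mul_inv]

/-- Points of a first-level piece near the complement of the open piece are images of points near
the complement of the open set. -/
theorem mem_image_boundarySet (G : MWGraph d V E) {Z W Q : Set (Pt d)} {a t : ℝ} (e : E)
    {w y : Pt d} (hw : w ∈ Z) (hwQ : w ∉ Q) (hy : y ∉ G.S e '' W)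
    (hwy : dist (G.S e w) y ≤ a * Real.exp (-t)) :
    G.S e w ∈ G.S e '' boundarySet Z W a Q (t + Real.log (G.r e)) := by
  obtain ⟨u, rfl⟩ := G.S_surjective e y
  refine mem_image_of_mem _ ⟨hw, hwQ, u, fun hu => hy (mem_image_of_mem _ hu), ?_⟩
  rw [G.exp_neg_add_log, ← mul_div_assoc, le_div_iff₀' (G.r_pos e), ← G.S_sim]
  exact hwy

variable {G : MWGraph d V E} {C K KC U : V → Set (Pt d)}

theorem coveringNumber_image_boundarySet_le (hKC : G.IsInhomAttractor C KC) {s M T : ℝ}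
    (hs : 0 ≤ s) (hT0 : 0 ≤ T) (hT : ∀ e, -Real.log (G.r e) ≤ T)
    (hM : ∀ j, (coveringNumber (KC j) (Real.exp (-T)) : ℝ) ≤ M)
    (a : ℝ) (Q : Set (Pt d)) (e : E) {t : ℝ} (ht : 0 ≤ t) :
    Real.exp (-s * t) * coveringNumber (G.S e ''
        boundarySet (KC (G.term e)) (U (G.term e)) a Q (t + Real.log (G.r e))) (Real.exp (-t)) ≤
      G.r e ^ s * boundaryWeight s (KC (G.term e)) (U (G.term e)) a Q (t + Real.log (G.r e)) +
        if t ≤ T then M else 0 := by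
  set D := boundarySet (KC (G.term e)) (U (G.term e)) a Q (t + Real.log (G.r e)) with hD
  have hKCb := hKC.isBounded (G.term e)
  have hDb : Bornology.IsBounded D := hKCb.subset (boundarySet_subset _ _ _ _ _)
  have hM0 : 0 ≤ M := (Nat.cast_nonneg _).trans (hM (G.term e))
  have h1 : (coveringNumber (G.S e '' D) (Real.exp (-t)) : ℝ) ≤
      coveringNumber D (Real.exp (-(t + Real.log (G.r e)))) := by
    rw [G.exp_neg_add_log]
    exact_mod_cast G.coveringNumber_image_S_le e hDb (Real.exp_pos _)
  rcases lt_or_ge (t + Real.log (G.r e)) 0 with hlt | hge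
  · rw [boundaryWeight, if_pos hlt, if_pos (by linarith [hT e]), mul_zero, zero_add]
    have h2 : (coveringNumber D (Real.exp (-(t + Real.log (G.r e)))) : ℝ) ≤
        coveringNumber (KC (G.term e)) (Real.exp (-T)) := by
      exact_mod_cast coveringNumber_mono hKCb (boundarySet_subset _ _ _ _ _) (Real.exp_pos _)
        (Real.exp_le_exp.2 (by linarith))
    have h3 : Real.exp (-s * t) ≤ 1 := Real.exp_le_one_iff.2 (by nlinarith)
    calc _ ≤ 1 * M := mul_le_mul h3 (h1.trans (h2.trans (hM _))) (by positivity) zero_le_one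
      _ = M := one_mul M
  · have h2 : Real.exp (-s * t) = G.r e ^ s * Real.exp (-s * (t + Real.log (G.r e))) := by
      rw [Real.rpow_def_of_pos (G.r_pos e), ← Real.exp_add]
      congr 1
      ring
    rw [boundaryWeight, if_neg hge.not_gt, ← mul_assoc, ← h2]
    refine le_add_of_le_of_nonneg (by gcongr) ?_
    split_ifs <;> simp [hM0]

/-- The weighted count of balls covering the condensation set and the boundary parts of the
first-level pieces, in terms of the weights at the terminal vertices. -/
theorem exp_mul_sum_coveringNumber_le [DecidableEq V] (hKC : G.IsInhomAttractor C KC)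
    {s M T : ℝ} (hs : 0 ≤ s) (hT0 : 0 ≤ T) (hT : ∀ e, -Real.log (G.r e) ≤ T)
    (hM : ∀ j, (coveringNumber (KC j) (Real.exp (-T)) : ℝ) ≤ M) (a : ℝ)
    (j : V) (Qe : E → Set (Pt d)) {t : ℝ} (ht : 0 ≤ t) :
    Real.exp (-s * t) * (∑ e with G.init e = j, (coveringNumber (G.S e ''
        boundarySet (KC (G.term e)) (U (G.term e)) a (Qe e) (t + Real.log (G.r e)))
          (Real.exp (-t)) : ℝ) + coveringNumber (C j) (Real.exp (-t))) ≤
      ∑ e with G.init e = j, G.r e ^ s *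
        boundaryWeight s (KC (G.term e)) (U (G.term e)) a (Qe e) (t + Real.log (G.r e)) +
        condWeight (C j) s ((Fintype.card E + 1) * M) T t := by
  have hM0 : 0 ≤ M := (Nat.cast_nonneg _).trans (hM j)
  have hcard : ∑ e with G.init e = j, (if t ≤ T then M else 0) ≤
      if t ≤ T then (Fintype.card E + 1) * M else 0 := by
    split_ifs
    · rw [Finset.sum_const, nsmul_eq_mul]
      have : ((Finset.univ.filter fun e => G.init e = j).card : ℝ) ≤ Fintype.card E := by
        exact_mod_cast Finset.card_le_univ _
      gcongr
      linarith
    · simp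
  have hsum := Finset.sum_le_sum fun e (_ : e ∈ Finset.univ.filter fun e => G.init e = j) =>
    coveringNumber_image_boundarySet_le (U := U) hKC hs hT0 hT hM a (Qe e) e ht
  rw [Finset.sum_add_distrib] at hsum
  rw [condWeight, if_neg ht.not_gt, mul_add, Finset.mul_sum]
  linarith

/-- The renewal inequality for the weighted covering numbers near the boundary. -/
theorem boundaryWeight_step [DecidableEq V] (hC : G.IsCondensation C)
    (hKC : G.IsInhomAttractor C KC) (hU : G.IsOSCWith U) {s M T : ℝ}
    (hs : 0 ≤ s) (hT0 : 0 ≤ T) (hT : ∀ e, -Real.log (G.r e) ≤ T)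
    (hM : ∀ j, (coveringNumber (KC j) (Real.exp (-T)) : ℝ) ≤ M) (a : ℝ)
    (j : V) (Q : Set (Pt d)) (Qe : E → Set (Pt d)) (t : ℝ) (hQ : ∀ e, G.S e '' Qe e ⊆ Q) :
    boundaryWeight s (KC j) (U j) a Q t ≤ ∑ e with G.init e = j, G.r e ^ s *
      boundaryWeight s (KC (G.term e)) (U (G.term e)) a (Qe e) (t + Real.log (G.r e)) +
      condWeight (C j) s ((Fintype.card E + 1) * M) T t := by
  have hM0 : 0 ≤ M := (Nat.cast_nonneg _).trans (hM j)
  rcases lt_or_ge t 0 with ht | ht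
  · rw [boundaryWeight, if_pos ht]
    exact add_nonneg (Finset.sum_nonneg fun e _ => mul_nonneg
      (Real.rpow_nonneg (G.r_pos e).le s) (boundaryWeight_nonneg ..))
      (condWeight_nonneg _ (by positivity) _ _)
  let D : E → Set (Pt d) := fun e => G.S e ''
    boundarySet (KC (G.term e)) (U (G.term e)) a (Qe e) (t + Real.log (G.r e))
  have hDb : ∀ e, Bornology.IsBounded (D e) := fun e =>
    (hKC.isBounded (G.init e)).subset
      ((image_mono (boundarySet_subset _ _ _ _ _)).trans (hKC.image_subset e))
  have hcover : boundarySet (KC j) (U j) a Q t ⊆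
      (⋃ e ∈ Finset.univ.filter (fun e => G.init e = j), D e) ∪ C j := by
    rintro z ⟨hz, hzQ, y, hy, hzy⟩
    rcases hKC.mem_cases hz with ⟨e, rfl, w, hw, rfl⟩ | hzC
    · refine Or.inl (mem_biUnion (by simp) (G.mem_image_boundarySet e hw
        (fun h => hzQ (hQ e (mem_image_of_mem _ h))) ?_ hzy))
      rintro ⟨u, hu, rfl⟩
      exact hy (hU.mem_of_mem e hu)
    · exact Or.inr hzC
  have hCb := (hC j).1.isBounded
  have hUb : Bornology.IsBounded (⋃ e ∈ Finset.univ.filter (fun e => G.init e = j), D e) :=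
    (Bornology.isBounded_biUnion (Finset.finite_toSet _)).2 fun e _ => hDb e
  have hcount : (coveringNumber (boundarySet (KC j) (U j) a Q t) (Real.exp (-t)) : ℝ) ≤
      ∑ e with G.init e = j, (coveringNumber (D e) (Real.exp (-t)) : ℝ) +
        coveringNumber (C j) (Real.exp (-t)) := by
    have hpos := Real.exp_pos (-t)
    exact_mod_cast (coveringNumber_mono (hUb.union hCb) hcover hpos le_rfl).trans
      ((coveringNumber_union_le hUb hCb hpos).trans
        (Nat.add_le_add_right (coveringNumber_biUnion_le _ _ hDb hpos) _))
  rw [boundaryWeight, if_neg ht.not_gt]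
  exact (mul_le_mul_of_nonneg_left hcount (Real.exp_pos _).le).trans
    (exp_mul_sum_coveringNumber_le hKC hs hT0 hT hM a j Qe ht)

/-- Discarding a part of `Z` that stays away from the complement of `W` changes the boundary
weight only at bounded times. -/
theorem boundaryWeight_le_of_far {s M N T a ε : ℝ} {Z W Q A : Set (Pt d)}
    (hZ : Bornology.IsBounded Z) (hs : 0 ≤ s) (hM : (coveringNumber Z (Real.exp (-T)) : ℝ) ≤ M)
    (hMN : M ≤ N) (hT : ∀ t, T < t → a * Real.exp (-t) < ε)
    (hQ : ∀ z ∈ Q, ∀ y ∉ W, ε ≤ dist z y) (t : ℝ) :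
    boundaryWeight s Z W a ∅ t ≤ boundaryWeight s Z W a Q t + condWeight A s N T t := by
  have hM0 : 0 ≤ M := (Nat.cast_nonneg _).trans hM
  have hN0 := hM0.trans hMN
  rcases lt_or_ge t 0 with ht | ht
  · simp [boundaryWeight, condWeight, ht]
  rcases le_or_gt t T with htT | htT
  · refine le_add_of_nonneg_of_le (boundaryWeight_nonneg ..) ?_
    rw [boundaryWeight, condWeight, if_neg ht.not_gt, if_neg ht.not_gt, if_pos htT]
    refine le_add_of_nonneg_of_le (by positivity) (le_trans ?_ hMN)
    have h1 : Real.exp (-s * t) ≤ 1 := Real.exp_le_one_iff.2 (by nlinarith)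
    have h2 : (coveringNumber (boundarySet Z W a ∅ t) (Real.exp (-t)) : ℝ) ≤
        coveringNumber Z (Real.exp (-T)) := by
      exact_mod_cast coveringNumber_mono hZ (boundarySet_subset _ _ _ _ _) (Real.exp_pos _)
        (Real.exp_le_exp.2 (by linarith))
    calc _ ≤ 1 * M := mul_le_mul h1 (h2.trans hM) (by positivity) zero_le_one
      _ = M := one_mul M
  · refine le_add_of_le_of_nonneg (le_of_eq ?_) (condWeight_nonneg _ hN0 _ _)
    have : boundarySet Z W a ∅ t = boundarySet Z W a Q t := by
      ext z
      refine ⟨fun ⟨hz, _, y, hy, hzy⟩ => ⟨hz, fun hzQ => ?_, y, hy, hzy⟩,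
        fun ⟨hz, _, h⟩ => ⟨hz, notMem_empty z, h⟩⟩
      exact absurd (hQ z hzQ y hy) (not_le.2 (hzy.trans_lt (hT t htT)))
    rw [boundaryWeight, boundaryWeight, this]

/-- The sum of the covering numbers of the first-level pieces exceeds the covering number of the
whole by at most the covering numbers of the parts near the boundaries of the pieces. -/
theorem sum_coveringNumber_le [DecidableEq V] (hKC : G.IsInhomAttractor C KC)
    (hU : G.IsOSCWith U) (hCU : ∀ i, C i ⊆ closure (U i)) (i : V) {ρ : ℝ} (hρ : 0 < ρ) :
    ∑ e with G.init e = i, coveringNumber (G.S e '' KC (G.term e)) ρ ≤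
      coveringNumber (KC i) ρ + ∑ e with G.init e = i,
        coveringNumber {x ∈ G.S e '' KC (G.term e) | ∃ y ∉ G.S e '' U (G.term e),
          dist x y ≤ 2 * ρ} ρ := by
  classical
  obtain ⟨c, hc⟩ := exists_coveringNumber (hKC.isBounded i) hρ
  let I : E → Finset (Fin (coveringNumber (KC i) ρ)) := fun e => Finset.univ.filter fun k =>
    (closedBall (c k) ρ ∩ G.S e '' KC (G.term e)).Nonempty ∧
      ∀ e', G.init e' = i → e' ≠ e → ¬ (closedBall (c k) ρ ∩ G.S e' '' KC (G.term e')).Nonempty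
  have hI : ∀ e ∈ Finset.univ.filter (fun e => G.init e = i),
      coveringNumber (G.S e '' KC (G.term e)) ρ ≤ (I e).card +
        coveringNumber {x ∈ G.S e '' KC (G.term e) | ∃ y ∉ G.S e '' U (G.term e),
          dist x y ≤ 2 * ρ} ρ := by
    intro e he
    obtain rfl : G.init e = i := by simpa using he
    refine coveringNumber_le_card_add (I e) c ((hKC.isBounded (G.init e)).subset
      ((sep_subset _ _).trans (hKC.image_subset e))) hρ fun x hx => ?_
    obtain ⟨k, hk⟩ := mem_iUnion.1 (hc (hKC.image_subset e hx))
    by_cases hkI : k ∈ I e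
    · exact Or.inl ⟨k, hkI, hk⟩
    · right
      have hmeet : (closedBall (c k) ρ ∩ G.S e '' KC (G.term e)).Nonempty := ⟨x, hk, hx⟩
      simp only [I, Finset.mem_filter, Finset.mem_univ, true_and, hmeet] at hkI
      push Not at hkI
      obtain ⟨e', he', hne, y, hyk, hy⟩ := hkI
      refine ⟨hx, y, notMem_image_of_mem_image hKC hU hCU he'.symm hne.symm hy, ?_⟩
      have h1 := dist_triangle_right x y (c k)
      have h2 := mem_closedBall.1 hk
      have h3 := mem_closedBall.1 hyk
      linarith
  have hcard : ∑ e with G.init e = i, (I e).card ≤ coveringNumber (KC i) ρ := by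
    rw [← Finset.card_biUnion]
    · simpa using Finset.card_le_univ ((Finset.univ.filter fun e => G.init e = i).biUnion I)
    · intro e he e' he' hne
      refine Finset.disjoint_left.2 fun k hk hk' => ?_
      simp only [I, Finset.mem_filter, Finset.mem_univ, true_and] at hk hk'
      exact hk'.2 e (by simpa using he) hne hk.1
  refine (Finset.sum_le_sum hI).trans ?_
  rw [Finset.sum_add_distrib]
  exact Nat.add_le_add_right hcard _

/-- The absolute value of the defect of additivity of covering numbers over unit time
intervals. -/
theorem abs_sum_coveringNumber_sub_le [DecidableEq V] (hC : G.IsCondensation C)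
    (hKC : G.IsInhomAttractor C KC) (hU : G.IsOSCWith U) (hCU : ∀ i, C i ⊆ closure (U i))
    (i : V) {τ t : ℝ} (hτt : τ ≤ t) (htτ : t ≤ τ + 1) :
    |∑ e with G.init e = i, (coveringNumber (G.S e '' KC (G.term e)) (Real.exp (-t)) : ℝ) -
        coveringNumber (KC i) (Real.exp (-t))| ≤
      coveringNumber (C i) (Real.exp (-(τ + 1))) + ∑ e with G.init e = i,
        (coveringNumber (G.S e '' boundarySet (KC (G.term e)) (U (G.term e)) (2 * Real.exp 1) ∅
          (τ + 1 + Real.log (G.r e))) (Real.exp (-(τ + 1))) : ℝ) := by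
  have hpos := Real.exp_pos (-t)
  have hscale : Real.exp (-(τ + 1)) ≤ Real.exp (-t) := Real.exp_le_exp.2 (by linarith)
  have hpiece : ∀ e, Bornology.IsBounded (G.S e '' KC (G.term e)) := fun e =>
    (hKC.isBounded _).subset (hKC.image_subset e)
  have hCb := (hC i).1.isBounded
  have hlower : (coveringNumber (KC i) (Real.exp (-t)) : ℝ) ≤
      ∑ e with G.init e = i, (coveringNumber (G.S e '' KC (G.term e)) (Real.exp (-t)) : ℝ) +
        coveringNumber (C i) (Real.exp (-(τ + 1))) := by
    have hUb : Bornology.IsBounded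
        (⋃ e ∈ Finset.univ.filter (fun e => G.init e = i), G.S e '' KC (G.term e)) :=
      (Bornology.isBounded_biUnion (Finset.finite_toSet _)).2 fun e _ => hpiece e
    have heq : KC i =
        (⋃ e ∈ Finset.univ.filter (fun e => G.init e = i), G.S e '' KC (G.term e)) ∪ C i := by
      conv_lhs => rw [hKC.2.2 i]
      simp
    have h1 := coveringNumber_union_le hUb hCb hpos
    rw [← heq] at h1
    exact_mod_cast h1.trans (Nat.add_le_add (coveringNumber_biUnion_le _ _ hpiece hpos)
      (coveringNumber_mono hCb subset_rfl (Real.exp_pos _) hscale))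
  have hupper : ∑ e with G.init e = i,
      (coveringNumber (G.S e '' KC (G.term e)) (Real.exp (-t)) : ℝ) ≤
      coveringNumber (KC i) (Real.exp (-t)) + ∑ e with G.init e = i,
        (coveringNumber (G.S e '' boundarySet (KC (G.term e)) (U (G.term e)) (2 * Real.exp 1) ∅
          (τ + 1 + Real.log (G.r e))) (Real.exp (-(τ + 1))) : ℝ) := by
    have h1 := sum_coveringNumber_le hKC hU hCU i hpos
    have h2 : ∀ e, coveringNumber {x ∈ G.S e '' KC (G.term e) | ∃ y ∉ G.S e '' U (G.term e),
          dist x y ≤ 2 * Real.exp (-t)} (Real.exp (-t)) ≤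
        coveringNumber (G.S e '' boundarySet (KC (G.term e)) (U (G.term e)) (2 * Real.exp 1) ∅
          (τ + 1 + Real.log (G.r e))) (Real.exp (-(τ + 1))) := by
      intro e
      refine coveringNumber_mono
        ((hpiece e).subset (image_mono (boundarySet_subset _ _ _ _ _))) ?_ (Real.exp_pos _) hscale
      rintro _ ⟨⟨w, hw, rfl⟩, y, hy, hwy⟩
      refine G.mem_image_boundarySet e hw (notMem_empty w) hy (hwy.trans ?_)
      rw [mul_assoc, ← Real.exp_add]
      gcongr
      linarith
    exact_mod_cast h1.trans (Nat.add_le_add_left (Finset.sum_le_sum fun e _ => h2 e) _)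
  have hn1 : (0 : ℝ) ≤ coveringNumber (C i) (Real.exp (-(τ + 1))) := by positivity
  have hn2 : (0 : ℝ) ≤ ∑ e with G.init e = i,
        (coveringNumber (G.S e '' boundarySet (KC (G.term e)) (U (G.term e)) (2 * Real.exp 1) ∅
          (τ + 1 + Real.log (G.r e))) (Real.exp (-(τ + 1))) : ℝ) := by positivity
  rw [abs_le]
  constructor <;> linarith

end MWGraph

theorem stmt6 {d : ℕ} {V E : Type} [Fintype V] [Fintype E] [DecidableEq V]
    (G : MWGraph d V E) (hSC : G.StronglyConnected)
    (C K KC U : V → Set (Pt d))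
    (hC : G.IsCondensation C) (hK : G.IsAttractor K) (hKC : G.IsInhomAttractor C KC)
    (hU : G.IsOSCWith U) (hUK : ∀ i, (U i ∩ K i).Nonempty)
    (hCU : ∀ i, C i ⊆ closure (U i))
    (s0 : ℝ) (hs0 : IsS0 G s0)
    (hint : ∀ i : V, ∫⁻ t in Set.Ioi (0 : ℝ),
      ENNReal.ofReal (Real.exp (-s0 * t) * (coveringNumber (C i) (Real.exp (-t)) : ℝ)) < ⊤)
    (Lstar : V → ℝ → ℝ)
    (hLstar : ∀ (i : V) (t : ℝ), Lstar i t =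
      (∑ e : E, if G.init e = i then
        ((coveringNumber (G.S e '' KC (G.term e)) (Real.exp (-t)) : ℝ)) else 0)
      - (coveringNumber (KC i) (Real.exp (-t)) : ℝ))
 :
    ∀ i : V, Summable (fun k : ℕ =>
      sSup {x : ℝ | ∃ t ∈ Set.Icc (k : ℝ) (k + 1), x = Real.exp (-s0 * t) * |Lstar i t|}) := by
  have hs := hs0.1
  obtain ⟨v, hv, hsub⟩ := G.exists_pos_subinvariant hSC hs0
  choose γ hγ ε hε hfar using MWGraph.exists_interior_path hK hKC hU hUK
  set a : ℝ := 2 * Real.exp 1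
  obtain ⟨T, hT0, hT, hTε⟩ : ∃ T : ℝ, 0 ≤ T ∧ (∀ e, -Real.log (G.r e) ≤ T) ∧
      ∀ j, a * Real.exp (-T) < ε j := by
    have hlim : Tendsto (fun T : ℝ => a * Real.exp (-T)) atTop (𝓝 0) := by
      simpa using (Real.tendsto_exp_neg_atTop_nhds_zero).const_mul a
    exact ((eventually_ge_atTop 0).and ((eventually_all.2 fun e => eventually_ge_atTop _).and
      (eventually_all.2 fun j => hlim.eventually_lt_const (hε j)))).exists
  obtain ⟨M, hM0, hM⟩ : ∃ M : ℝ, 0 ≤ M ∧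
      ∀ j, (coveringNumber (KC j) (Real.exp (-T)) : ℝ) ≤ M :=
    ⟨∑ j, (coveringNumber (KC j) (Real.exp (-T)) : ℝ), by positivity, fun j =>
      Finset.single_le_sum (f := fun j => (coveringNumber (KC j) (Real.exp (-T)) : ℝ))
        (fun j _ => Nat.cast_nonneg _) (Finset.mem_univ j)⟩
  set N : ℝ := (Fintype.card E + 1) * M
  have hN0 : 0 ≤ N := by positivity
  have hMN : M ≤ N := le_mul_of_one_le_left hM0 (le_add_of_nonneg_left (Nat.cast_nonneg _))
  obtain ⟨H, hH0, hH⟩ : ∃ H : ℝ, 0 ≤ H ∧ ∀ j x (m : ℕ),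
      ∑ k ∈ Finset.range m, condWeight (C j) s0 N T (x - (k : ℕ)) ≤ H := by
    choose H hH0 hH using fun j =>
      exists_sum_condWeight_le (hC j).1.isBounded hs hN0 T (hint j)
    exact ⟨∑ j, H j, Finset.sum_nonneg fun j _ => hH0 j, fun j x m => (hH j x m).trans
      (Finset.single_le_sum (fun j _ => hH0 j) (Finset.mem_univ j))⟩
  obtain ⟨B, hB⟩ := G.sum_range_le_of_renewal hs hv hsub
    (fun j => MWGraph.boundaryWeight s0 (KC j) (U j) a) (fun j => condWeight (C j) s0 N T) KC γ hγ
    (fun j Q t ht => if_pos ht)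
    (fun j t => by
      have : MWGraph.boundarySet (KC j) (U j) a (KC j) t = ∅ :=
        eq_empty_of_forall_notMem fun z hz => hz.2.1 hz.1
      simp [MWGraph.boundaryWeight, this, coveringNumber_empty])
    (MWGraph.boundaryWeight_step hC hKC hU hs hT0 hT hM a)
    (fun j => MWGraph.boundaryWeight_le_of_far (hKC.isBounded j) hs (hM j) hMN
      (fun t ht => lt_of_le_of_lt (by gcongr) (hTε j)) (hfar j))
    hH0 hH
  intro i
  let bound : ℝ → ℝ := fun t => ∑ e with G.init e = i, G.r e ^ s0 *
    MWGraph.boundaryWeight s0 (KC (G.term e)) (U (G.term e)) a ∅ (t + Real.log (G.r e)) +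
    condWeight (C i) s0 N T t
  have hbound0 : ∀ t, 0 ≤ bound t := fun t =>
    add_nonneg (Finset.sum_nonneg fun e _ => mul_nonneg (Real.rpow_nonneg (G.r_pos e).le s0)
      (MWGraph.boundaryWeight_nonneg ..)) (condWeight_nonneg _ hN0 _ _)
  have hterm : ∀ k : ℕ, ∀ t ∈ Icc (k : ℝ) (k + 1),
      Real.exp (-s0 * t) * |Lstar i t| ≤ Real.exp s0 * bound (k + 1) := by
    intro k t ht
    have hdefect := MWGraph.abs_sum_coveringNumber_sub_le hC hKC hU hCU i ht.1 ht.2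
    rw [Finset.sum_filter, ← hLstar, add_comm] at hdefect
    have hexp : Real.exp (-s0 * t) ≤ Real.exp s0 * Real.exp (-s0 * (k + 1)) := by
      rw [← Real.exp_add]
      exact Real.exp_le_exp.2 (by nlinarith [ht.1])
    refine (mul_le_mul hexp hdefect (abs_nonneg _) (by positivity)).trans ?_
    rw [mul_assoc]
    gcongr
    exact MWGraph.exp_mul_sum_coveringNumber_le hKC hs hT0 hT hM a i (fun _ => ∅) (by positivity)
  have hsum : ∀ x (m : ℕ), ∑ k ∈ Finset.range m, bound (x - (k : ℕ)) ≤
      ∑ e with G.init e = i, G.r e ^ s0 * (B * v (G.term e)) + H := by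
    intro x m
    rw [Finset.sum_add_distrib, Finset.sum_comm]
    simp only [← Finset.mul_sum]
    gcongr with e _
    · exact Real.rpow_nonneg (G.r_pos e).le s0
    · simp only [sub_add_eq_add_sub]
      exact hB _ _ _
    · exact hH i x m
  have hsummable : Summable fun k : ℕ => bound (k + 1) := by
    refine summable_of_sum_range_le
      (c := ∑ e with G.init e = i, G.r e ^ s0 * (B * v (G.term e)) + H)
      (fun k => hbound0 _) fun m => ?_
    refine le_trans (le_of_eq ?_) (hsum m m)
    rw [← Finset.sum_range_reflect]
    refine Finset.sum_congr rfl fun k hk => ?_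
    have hkm := Finset.mem_range.1 hk
    rw [Nat.sub_sub, Nat.cast_sub (by omega)]
    push_cast
    ring_nf
  refine Summable.of_nonneg_of_le (fun k => Real.sSup_nonneg ?_) (fun k => Real.sSup_le ?_ ?_)
    (hsummable.mul_left (Real.exp s0))
  · rintro x ⟨t, -, rfl⟩
    positivity
  · rintro x ⟨t, ht, rfl⟩
    exact hterm k t ht
  · exact mul_nonneg (Real.exp_pos _).le (hbound0 _)
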